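/- (Spectrum of the N-fold Kronecker sum) Let m N : ℕ with N ≥ 1, and A : Matrix (Fin m) (Fin m) ℂ. Define the Kronecker sum M : Matrix (Fin N → Fin m) (Fin N → Fin m) ℂ by M p q = ∑ t : Fin N, (if ∀ k ≠ t, p k = q k then A (p t) (q t) else 0). Then spectrum ℂ M = { z : ℂ | ∃ f : Fin N → ℂ, (∀ t, f t ∈ spectrum ℂ A) ∧ z = ∑ t, f t }, i.e., the eigenvalues of M are exactly the N-fold sums of eigenvalues of A. -/

import Mathlib

/-!
The summands of a Kronecker sum `M` commute, so each eigenspace of `M` contains a common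
eigenvector `v` of all of them. Fixing all coordinates but the `i`-th turns `v` into an
eigenvector of the `i`-th matrix, whence every eigenvalue of `M` is a sum of eigenvalues of the
factors. Conversely, the tensor product of eigenvectors of the factors is an eigenvector of `M`,
and its eigenvalue is the sum of theirs.
-/

open Matrix

section CommutingEndomorphisms

variable {K V ι : Type*} [Field K] [IsAlgClosed K] [AddCommGroup V] [Module K V]
  [FiniteDimensional K V] {f : ι → Module.End K V}

-- A minimal nonzero invariant submodule of `p` lies in a single eigenspace of each `f i`, as its
-- intersection with an eigenspace of `f i` is again invariant.
theorem exists_common_eigenvector_of_commute (hf : ∀ i j, Commute (f i) (f j))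
    {p : Submodule K V} (hp : p ≠ ⊥) (hfp : ∀ i, p ∈ (f i).invtSubmodule) :
    ∃ χ : ι → K, ∃ v ∈ p, v ≠ 0 ∧ ∀ i, f i v = χ i • v := by
  obtain ⟨q, hqp, hq⟩ := exists_minimal_le_of_wellFoundedLT
    (fun q : Submodule K V ↦ q ≠ ⊥ ∧ ∀ i, q ∈ (f i).invtSubmodule) p ⟨hp, hfp⟩
  obtain ⟨hq_ne, hq_inv⟩ := hq.prop
  have exists_le_eigenspace (i : ι) : ∃ μ, q ≤ (f i).eigenspace μ := by
    have : Nontrivial q := Submodule.nontrivial_iff_ne_bot.2 hq_ne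
    obtain ⟨μ, hμ⟩ := Module.End.exists_eigenvalue ((f i).restrict (hq_inv i))
    obtain ⟨⟨v, hvq⟩, hv⟩ := hμ.exists_hasEigenvector
    have hv_mem : v ∈ q ⊓ (f i).eigenspace μ :=
      ⟨hvq, Module.End.mem_eigenspace_iff.2 (congrArg Subtype.val hv.apply_eq_smul)⟩
    have hv_ne : v ≠ 0 := fun h ↦ hv.2 (Subtype.ext h)
    have inf_inv (j : ι) : q ⊓ (f i).eigenspace μ ∈ (f j).invtSubmodule :=
      Module.End.invtSubmodule.inf_mem (hq_inv j)
        (Module.End.mapsTo_genEigenspace_of_comm (hf i j) μ 1)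
    have inf_ne : q ⊓ (f i).eigenspace μ ≠ ⊥ := (Submodule.ne_bot_iff _).2 ⟨v, hv_mem, hv_ne⟩
    exact ⟨μ, (hq.le_of_le ⟨inf_ne, inf_inv⟩ inf_le_left).trans inf_le_right⟩
  choose χ hχ using exists_le_eigenspace
  obtain ⟨v, hv, hv_ne⟩ := q.exists_mem_ne_zero_of_ne_bot hq_ne
  exact ⟨χ, v, hqp hv, hv_ne, fun i ↦ Module.End.mem_eigenspace_iff.1 (hχ i hv)⟩

theorem exists_eq_sum_of_hasEigenvalue_sum [Fintype ι] (hf : ∀ i j, Commute (f i) (f j))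
    {z : K} (hz : (∑ i, f i).HasEigenvalue z) :
    ∃ χ : ι → K, (∀ i, (f i).HasEigenvalue (χ i)) ∧ z = ∑ i, χ i := by
  have eigenspace_inv (j : ι) : (∑ i, f i).eigenspace z ∈ (f j).invtSubmodule :=
    Module.End.mapsTo_genEigenspace_of_comm (Commute.sum_left _ _ _ fun i _ ↦ hf i j) z 1
  obtain ⟨χ, v, hvz, hv_ne, hv⟩ := exists_common_eigenvector_of_commute hf hz eigenspace_inv
  refine ⟨χ, fun i ↦ Module.End.hasEigenvalue_of_hasEigenvector
    ⟨Module.End.mem_eigenspace_iff.2 (hv i), hv_ne⟩, smul_left_injective K hv_ne ?_⟩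
  calc z • v = (∑ i, f i) v := (Module.End.mem_eigenspace_iff.1 hvz).symm
    _ = (∑ i, χ i) • v := by simp only [LinearMap.sum_apply, hv, Finset.sum_smul]

end CommutingEndomorphisms

section MatrixEigenvalues

variable {K n : Type*} [Field K] [Fintype n] [DecidableEq n]

theorem mem_spectrum_iff_exists_mulVec_eq_smul {A : Matrix n n K} {z : K} :
    z ∈ spectrum K A ↔ ∃ v ≠ 0, A *ᵥ v = z • v := by
  rw [spectrum.mem_iff, isUnit_iff_isUnit_det, isUnit_iff_ne_zero, not_not,
    ← exists_mulVec_eq_zero_iff]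
  simp only [sub_mulVec, sub_eq_zero, Algebra.algebraMap_eq_smul_one, smul_mulVec, one_mulVec,
    eq_comm]

theorem exists_eq_sum_of_mem_spectrum_sum [IsAlgClosed K] {ι : Type*} [Fintype ι]
    {B : ι → Matrix n n K} (hB : ∀ i j, Commute (B i) (B j)) {z : K}
    (hz : z ∈ spectrum K (∑ i, B i)) :
    ∃ χ : ι → K, (∀ i, χ i ∈ spectrum K (B i)) ∧ z = ∑ i, χ i := by
  simp only [← spectrum_toLin', ← Module.End.hasEigenvalue_iff_mem_spectrum, map_sum] at hz ⊢
  exact exists_eq_sum_of_hasEigenvalue_sum (fun i j ↦ (hB i j).map toLinAlgEquiv') hz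

end MatrixEigenvalues

section KroneckerSum

variable {ι R K : Type*} [Fintype ι] [DecidableEq ι] {n : ι → Type*} [∀ i, DecidableEq (n i)]

/-- The operator `I ⊗ ⋯ ⊗ B ⊗ ⋯ ⊗ I` with `B` acting in the `i`-th factor of a tensor product.
A basis vector of the tensor product is encoded by its family of indices `∀ j, n j`. -/
def onFactor [Zero R] (i : ι) (B : Matrix (n i) (n i) R) :
    Matrix (∀ j, n j) (∀ j, n j) R :=
  Matrix.of fun p q ↦ if ∀ k, k ≠ i → p k = q k then B (p i) (q i) else 0

/-- The Kronecker sum `⨁ᵢ A i` of a finite family of square matrices, possibly of different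
sizes. -/
def kroneckerSum [AddCommMonoid R] (A : ∀ i, Matrix (n i) (n i) R) :
    Matrix (∀ i, n i) (∀ i, n i) R :=
  ∑ i, onFactor i (A i)

variable [∀ i, Fintype (n i)]

theorem onFactor_mulVec_apply [NonUnitalNonAssocSemiring R] (i : ι) (B : Matrix (n i) (n i) R)
    (v : (∀ j, n j) → R) (p : ∀ j, n j) :
    (onFactor i B *ᵥ v) p = (B *ᵥ fun a ↦ v (Function.update p i a)) (p i) := by
  have agree_iff (q : ∀ j, n j) :
      (∀ k, k ≠ i → p k = q k) ↔ Function.update p i (q i) = q := by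
    simp [Function.update_eq_iff]
  symm
  refine Finset.sum_of_injOn (Function.update p i) (Function.update_injective p i).injOn
    (by simp) (fun q _ hq ↦ ?_) fun a _ ↦ ?_
  · have : ¬ ∀ k, k ≠ i → p k = q k := fun h ↦ hq ⟨q i, by simp, (agree_iff q).1 h⟩
    simp only [onFactor, of_apply, if_neg this, zero_mul]
  · simp [onFactor, agree_iff]

theorem commute_onFactor [CommSemiring R] {i j : ι} (hij : i ≠ j)
    (B : Matrix (n i) (n i) R) (C : Matrix (n j) (n j) R) :
    Commute (onFactor i B) (onFactor j C) := by
  refine ext_iff_mulVec.2 fun v ↦ funext fun p ↦ ?_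
  simp only [← mulVec_mulVec, onFactor_mulVec_apply]
  simp only [mulVec, dotProduct, Finset.mul_sum, Function.update_of_ne hij,
    Function.update_of_ne hij.symm, Function.update_comm hij]
  rw [Finset.sum_comm]
  simp only [mul_left_comm]

theorem spectrum_onFactor_subset [Field K] (i : ι) (B : Matrix (n i) (n i) K) :
    spectrum K (onFactor i B) ⊆ spectrum K B := by
  intro z hz
  obtain ⟨v, hv_ne, hv⟩ := mem_spectrum_iff_exists_mulVec_eq_smul.1 hz
  obtain ⟨p, hp⟩ := Function.ne_iff.1 hv_ne
  refine mem_spectrum_iff_exists_mulVec_eq_smul.2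
    ⟨fun a ↦ v (Function.update p i a), Function.ne_iff.2 ⟨p i, by simpa using hp⟩, ?_⟩
  ext a
  simpa [onFactor_mulVec_apply] using congrFun hv (Function.update p i a)

theorem onFactor_mulVec_prod [CommSemiring R] (i : ι) {B : Matrix (n i) (n i) R}
    {v : ∀ j, n j → R} {z : R} (hv : B *ᵥ v i = z • v i) :
    (onFactor i B *ᵥ fun p ↦ ∏ j, v j (p j)) = z • fun p ↦ ∏ j, v j (p j) := by
  ext p
  have prod_update (a : n i) : ∏ j, v j (Function.update p i a j) =
      (∏ j ∈ Finset.univ \ {i}, v j (p j)) * v i a := by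
    simp only [Function.apply_update fun j ↦ v j,
      Finset.prod_update_of_mem (Finset.mem_univ i), mul_comm]
  calc (onFactor i B *ᵥ fun p ↦ ∏ j, v j (p j)) p
      = (B *ᵥ (∏ j ∈ Finset.univ \ {i}, v j (p j)) • v i) (p i) := by
        simp only [onFactor_mulVec_apply, prod_update, Pi.smul_def, smul_eq_mul]
    _ = z * ((∏ j ∈ Finset.univ \ {i}, v j (p j)) * v i (p i)) := by
        simp only [mulVec_smul, hv, Pi.smul_apply, smul_eq_mul, mul_left_comm]
    _ = z * ∏ j, v j (p j) := by rw [← prod_update, Function.update_eq_self]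

theorem sum_mem_spectrum_kroneckerSum [Field K] {A : ∀ i, Matrix (n i) (n i) K} {f : ι → K}
    (hf : ∀ i, f i ∈ spectrum K (A i)) : ∑ i, f i ∈ spectrum K (kroneckerSum A) := by
  choose v hv_ne hv using fun i ↦ mem_spectrum_iff_exists_mulVec_eq_smul.1 (hf i)
  choose p₀ hp₀ using fun i ↦ Function.ne_iff.1 (hv_ne i)
  refine mem_spectrum_iff_exists_mulVec_eq_smul.2 ⟨fun p ↦ ∏ i, v i (p i),
    Function.ne_iff.2 ⟨p₀, Finset.prod_ne_zero_iff.2 fun i _ ↦ hp₀ i⟩, ?_⟩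
  simp only [kroneckerSum, sum_mulVec, onFactor_mulVec_prod _ (hv _), Finset.sum_smul]

theorem spectrum_kronecker_sum_pow_general [Field K] [IsAlgClosed K]
    (A : ∀ i, Matrix (n i) (n i) K) :
    spectrum K (kroneckerSum A) =
      { z : K | ∃ f : ι → K, (∀ i, f i ∈ spectrum K (A i)) ∧ z = ∑ i, f i } := by
  have commute_summands (i j : ι) : Commute (onFactor i (A i)) (onFactor j (A j)) := by
    obtain rfl | hij := eq_or_ne i j
    · exact Commute.refl _
    · exact commute_onFactor hij _ _
  ext z
  constructor
  · intro hz
    obtain ⟨f, hf, hzf⟩ := exists_eq_sum_of_mem_spectrum_sum commute_summands hz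
    exact ⟨f, fun i ↦ spectrum_onFactor_subset i (A i) (hf i), hzf⟩
  · rintro ⟨f, hf, rfl⟩
    exact sum_mem_spectrum_kroneckerSum hf

end KroneckerSum

theorem spectrum_kronecker_sum_pow (m N : ℕ) (hN : 1 ≤ N)
    (A : Matrix (Fin m) (Fin m) ℂ) :
    spectrum ℂ (Matrix.of fun p q : Fin N → Fin m =>
        ∑ t : Fin N, if ∀ k, k ≠ t → p k = q k then A (p t) (q t) else 0)
      = { z : ℂ | ∃ f : Fin N → ℂ, (∀ t, f t ∈ spectrum ℂ A) ∧ z = ∑ t, f t } := by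
  rw [← spectrum_kronecker_sum_pow_general fun _ : Fin N ↦ A]
  exact congrArg (spectrum ℂ) (by ext p q; simp [kroneckerSum, onFactor, Matrix.sum_apply])
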